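/- Let W be the Lie algebra of ℂ-linear derivations of ℂ[x,x⁻¹], with basis d_n (n ∈ ℤ) given by d_n(x) = −x^{n+1}, so that [d_m,d_n] = (m−n)d_{m+n}. Let c : W × W → ℂ be a bilinear map that is alternating (c(X,X) = 0 for all X) and satisfies the 2-cocycle condition c([X,Y],Z) + c([Y,Z],X) + c([Z,X],Y) = 0 for all X,Y,Z ∈ W. Then there exist a constant α ∈ ℂ and a ℂ-linear map f : W → ℂ such that c(d_m, d_n) = α·δ_{m+n,0}·(m³−m) + f([d_m,d_n]) for all m,n ∈ ℤ. In other words, every 2-cocycle on the centerless Virasoro algebra is, up to a coboundary, a scalar multiple of the Virasoro cocycle, so the Virasoro algebra is the unique nontrivial one-dimensional central extension of W up to equivalence and rescaling. -/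

import Mathlib

open LaurentPolynomial

/-!
Since `⁅d 0, d n⁆ = -n • d n`, the `d n` are eigenvectors of `ad (d 0)` with distinct eigenvalues,
so a linear map may take arbitrary values on them. Its coboundary can therefore be chosen to correct
the cocycle `c` so that `c (d 0) (d n) = 0` for all `n` and `c (d 1) (d (-1)) = 0`. The cocycle
identity with one argument `d 0` then says that `c` is invariant under `ad (d 0)`, so that
`c (d m) (d n) = 0` unless `m + n = 0`. With one argument `d 1` it becomes the recursion
`(k - 1) b (k + 1) = (k + 2) b k` for `b k = c (d k) (d (-k))`, whose odd solutions vanishing at `1`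
are the multiples of `k ^ 3 - k`.
-/

open LieModule.Cohomology

theorem exists_linearMap_apply_eq_of_linearIndependent {K V M ι : Type*} [Field K] [AddCommGroup V]
    [Module K V] [AddCommGroup M] [Module K M] {v : ι → V} (hv : LinearIndependent K v)
    (a : ι → M) : ∃ f : V →ₗ[K] M, ∀ i, f (v i) = a i := by
  obtain ⟨g, hg⟩ := (Finsupp.linearCombination K v).exists_leftInverse_of_injective
    (LinearMap.ker_eq_bot.mpr hv)
  refine ⟨Finsupp.linearCombination K a ∘ₗ g, fun i => ?_⟩
  simpa using congrArg (Finsupp.linearCombination K a)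
    (LinearMap.congr_fun hg (Finsupp.single i 1))

theorem mem_twoCocycle_iff_cyclic_sum_eq_zero {R L M : Type*} [CommRing R] [LieRing L]
    [LieAlgebra R L] [AddCommGroup M] [Module R M] [LieRingModule L M] [LieModule R L M]
    [LieModule.IsTrivial L M] (c : twoCochain R L M) :
    c ∈ twoCocycle R L M ↔ ∀ x y z, c ⁅x, y⁆ z + c ⁅y, z⁆ x + c ⁅z, x⁆ y = 0 := by
  rw [mem_twoCocycle_iff_of_trivial]
  refine forall₃_congr fun x y z => ?_
  rw [← twoCochain_skew c _ x, ← twoCochain_skew c _ y, ← lie_skew z x, map_neg,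
    LinearMap.neg_apply, ← sub_eq_zero, ← neg_eq_zero]
  abel_nf

section LaurentDerivation

variable {R M : Type*} [CommRing R] [AddCommGroup M] [Module R M] [Module R[T;T⁻¹] M]

theorem derivation_apply_T (D : Derivation R R[T;T⁻¹] M) (n : ℤ) :
    D (T n) = n • (T (n - 1) : R[T;T⁻¹]) • D (T 1) := by
  have natCast_case (k : ℕ) : D (T k) = k • (T (k - 1) : R[T;T⁻¹]) • D (T 1) := by
    rcases k with - | k
    · simp
    · have h := D.leibniz_pow (T 1) (k + 1)
      simpa only [T_pow, mul_one, Nat.add_sub_cancel, Nat.cast_succ, add_sub_cancel_right] using h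
  obtain ⟨k, rfl | rfl⟩ := n.eq_nat_or_neg
  · simpa using natCast_case k
  · have mul_eq_one : (T (-k) * T k : R[T;T⁻¹]) = 1 := by
      rw [← T_add, neg_add_cancel, T_zero]
    rw [D.leibniz_of_mul_eq_one mul_eq_one, natCast_case, neg_smul, neg_smul, natCast_zsmul,
      smul_comm _ k, smul_smul, T_pow, ← T_add]
    congr 4
    push_cast
    ring

theorem derivation_ext_of_apply_T_one {D E : Derivation R R[T;T⁻¹] M} (h : D (T 1) = E (T 1)) :
    D = E := by
  refine Derivation.ext fun p => ?_
  induction p using LaurentPolynomial.induction_on' with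
  | add p q hp hq => rw [map_add, map_add, hp, hq]
  | C_mul_T n a =>
    rw [← smul_eq_C_mul, D.map_smul, E.map_smul, derivation_apply_T D, derivation_apply_T E, h]

end LaurentDerivation

/-- A family indexed by `ℤ` in a Lie algebra satisfying the relations of the Witt algebra. Linear
independence is not part of the notion: over a field of characteristic zero it is automatic unless
the family is zero. -/
def IsWittFamily (R : Type*) {L : Type*} [CommRing R] [LieRing L] [LieAlgebra R L]
    (d : ℤ → L) : Prop :=
  ∀ m n : ℤ, ⁅d m, d n⁆ = ((m : R) - n) • d (m + n)

theorem isWittFamily_of_apply_T_one {R : Type*} [CommRing R]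
    {d : ℤ → Derivation R R[T;T⁻¹] R[T;T⁻¹]} (hd : ∀ n, d n (T 1) = -T (n + 1)) :
    IsWittFamily R d := by
  intro m n
  apply derivation_ext_of_apply_T_one
  have apply_apply (k l : ℤ) : d k (d l (T 1)) = ((l : R) + 1) • T (k + l + 1) := by
    rw [hd, map_neg, derivation_apply_T, hd, smul_eq_mul, mul_neg, ← T_add, smul_neg, neg_neg,
      ← Int.cast_smul_eq_zsmul R]
    push_cast
    congr 2
    ring
  rw [Derivation.commutator_apply, apply_apply, apply_apply, Derivation.smul_apply, hd,
    add_comm n m]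
  module

namespace IsWittFamily

section CommRing

variable {R L M : Type*} [CommRing R] [LieRing L] [LieAlgebra R L] [AddCommGroup M] [Module R M]
  [LieRingModule L M] [LieModule R L M] [LieModule.IsTrivial L M] {d : ℤ → L}
  {c : twoCochain R L M}

theorem cocycle_apply (hd : IsWittFamily R d) (hc : c ∈ twoCocycle R L M) (m n p : ℤ) :
    ((n : R) - p) • c (d m) (d (n + p)) =
      ((m : R) - n) • c (d (m + n)) (d p) + ((m : R) - p) • c (d n) (d (m + p)) := by
  simpa only [hd _ _, map_smul, LinearMap.smul_apply] using
    (mem_twoCocycle_iff_of_trivial R L M c).mp hc (d m) (d n) (d p)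

theorem cocycle_apply_neg_succ (hd : IsWittFamily R d) (hc : c ∈ twoCocycle R L M)
    (h1 : c (d 1) (d (-1)) = 0) (k : ℤ) :
    ((k : R) - 1) • c (d (k + 1)) (d (-(k + 1))) = ((k : R) + 2) • c (d k) (d (-k)) := by
  have h := hd.cocycle_apply hc 1 k (-(k + 1))
  rw [show k + -(k + 1) = -1 by ring, show 1 + -(k + 1) = -k by ring, add_comm 1 k, h1] at h
  push_cast at h
  linear_combination (norm := module) h

end CommRing

variable {K L : Type*} [Field K] [CharZero K] [LieRing L] [LieAlgebra K L] {d : ℤ → L}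

theorem eq_zero_of_apply_zero (hd : IsWittFamily K d) (h : d 0 = 0) : d = 0 := by
  funext n
  rcases eq_or_ne n 0 with rfl | hn
  · exact h
  · simpa [h, hn] using hd 0 n

theorem apply_ne_zero (hd : IsWittFamily K d) (h : d ≠ 0) (n : ℤ) : d n ≠ 0 := by
  intro hn
  have two_mul_smul : ((n : K) + n) • d 0 = 0 := by simpa [hn] using (hd n (-n)).symm
  rcases smul_eq_zero.mp two_mul_smul with hn' | h0
  · obtain rfl : n = 0 := by simpa [← two_mul] using hn'
    exact h (hd.eq_zero_of_apply_zero hn)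
  · exact h (hd.eq_zero_of_apply_zero h0)

theorem linearIndependent (hd : IsWittFamily K d) (h : d ≠ 0) : LinearIndependent K d := by
  refine Module.End.eigenvectors_linearIndependent' (LieAlgebra.ad K L (d 0))
    (fun n : ℤ => -(n : K)) (neg_injective.comp Int.cast_injective) d
    fun n => ⟨?_, hd.apply_ne_zero h n⟩
  simpa [Module.End.mem_eigenspace_iff] using hd 0 n

variable {M : Type*} [AddCommGroup M] [Module K M] [LieRingModule L M] [LieModule K L M]
  [LieModule.IsTrivial L M] {c : twoCochain K L M}

theorem exists_add_coboundary_normalized (hd : IsWittFamily K d) (c : twoCochain K L M) :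
    ∃ f : oneCochain K L M, (∀ n, (c + d₁₂ K L M f) (d 0) (d n) = 0) ∧
      (c + d₁₂ K L M f) (d 1) (d (-1)) = 0 := by
  rcases eq_or_ne d 0 with rfl | hne
  · exact ⟨0, by simp⟩
  obtain ⟨f, hf⟩ := exists_linearMap_apply_eq_of_linearIndependent (hd.linearIndependent hne)
    fun n => if n = 0 then (2⁻¹ : K) • c (d 1) (d (-1)) else -(n : K)⁻¹ • c (d 0) (d n)
  simp only [add_apply_apply, d₁₂_apply_apply_ofTrivial, hd _ _, map_smul]
  refine ⟨f, fun n => ?_, ?_⟩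
  · rcases eq_or_ne n 0 with rfl | hn
    · simp
    · simp [hf, hn]
  · norm_num [hf, smul_smul]

theorem cocycle_apply_eq_zero_of_add_ne_zero (hd : IsWittFamily K d) (hc : c ∈ twoCocycle K L M)
    (h0 : ∀ n, c (d 0) (d n) = 0) {m n : ℤ} (hmn : m + n ≠ 0) : c (d m) (d n) = 0 := by
  have invariant : ((m : K) + n) • c (d m) (d n) = 0 := by
    have h := hd.cocycle_apply hc 0 m n
    simp only [h0, zero_add] at h
    push_cast at h
    linear_combination (norm := module) h
  exact (smul_eq_zero.mp invariant).resolve_left (by exact_mod_cast hmn)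

theorem cocycle_apply_neg (hd : IsWittFamily K d) (hc : c ∈ twoCocycle K L M)
    (h1 : c (d 1) (d (-1)) = 0) (m : ℤ) :
    c (d m) (d (-m)) = ((m : K) ^ 3 - m) • (6⁻¹ : K) • c (d 2) (d (-2)) := by
  have two_le_case (k : ℕ) (hk : 2 ≤ k) :
      c (d k) (d (-k)) = ((k : K) ^ 3 - k) • (6⁻¹ : K) • c (d 2) (d (-2)) := by
    induction k, hk using Nat.le_induction with
    | base => norm_num [smul_smul]
    | succ k hk ih =>
      have hk' : (k : K) - 1 ≠ 0 := sub_ne_zero.mpr (by exact_mod_cast (by omega : k ≠ 1))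
      have h := hd.cocycle_apply_neg_succ hc h1 k
      rw [ih] at h
      apply smul_right_injective M hk'
      push_cast at h ⊢
      linear_combination (norm := module) h
  have natCast_case (k : ℕ) :
      c (d k) (d (-k)) = ((k : K) ^ 3 - k) • (6⁻¹ : K) • c (d 2) (d (-2)) := by
    match k with
    | 0 => simp
    | 1 => simp [h1]
    | k + 2 => exact two_le_case (k + 2) (by omega)
  obtain ⟨k, rfl | rfl⟩ := m.eq_nat_or_neg
  · exact_mod_cast natCast_case k
  · rw [← twoCochain_skew, neg_neg, natCast_case]
    push_cast
    module

theorem exists_cocycle_apply_eq_smul_add_apply_lie (hd : IsWittFamily K d)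
    (hc : c ∈ twoCocycle K L M) :
    ∃ (α : M) (f : L →ₗ[K] M), ∀ m n : ℤ, c (d m) (d n) =
      ((if m + n = 0 then 1 else 0) * ((m : K) ^ 3 - m)) • α + f ⁅d m, d n⁆ := by
  obtain ⟨f, h0, h1⟩ := hd.exists_add_coboundary_normalized c
  set c' := c + d₁₂ K L M f with hc'_def
  have hc' : c' ∈ twoCocycle K L M := add_mem hc (LinearMap.congr_fun (d₂₃_comp_d₁₂ K L M) f)
  refine ⟨(6⁻¹ : K) • c' (d 2) (d (-2)), f, fun m n => ?_⟩
  have c_eq : c (d m) (d n) = c' (d m) (d n) + f ⁅d m, d n⁆ := by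
    rw [hc'_def, add_apply_apply, d₁₂_apply_apply_ofTrivial, neg_add_cancel_right]
  rw [c_eq]
  congr 1
  split_ifs with hmn
  · obtain rfl := eq_neg_of_add_eq_zero_right hmn
    rw [one_mul, hd.cocycle_apply_neg hc' h1]
  · rw [hd.cocycle_apply_eq_zero_of_add_ne_zero hc' h0 hmn, zero_mul, zero_smul]

end IsWittFamily

theorem virasoro_cocycle_classification_general {K L M : Type*} [Field K] [CharZero K] [LieRing L]
    [LieAlgebra K L] [AddCommGroup M] [Module K M] {d : ℤ → L} (hd : IsWittFamily K d)
    (c : L →ₗ[K] L →ₗ[K] M) (halt : ∀ X, c X X = 0)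
    (hcoc : ∀ X Y Z, c ⁅X, Y⁆ Z + c ⁅Y, Z⁆ X + c ⁅Z, X⁆ Y = 0) :
    ∃ (α : M) (f : L →ₗ[K] M), ∀ m n : ℤ, c (d m) (d n) =
      ((if m + n = 0 then 1 else 0) * ((m : K) ^ 3 - m)) • α + f ⁅d m, d n⁆ := by
  let e := TrivialLieModule.equiv K L M
  let c' : twoCochain K L (TrivialLieModule K L M) := ⟨c.compr₂ e.symm, fun X => by simp [halt]⟩
  have hc' : c' ∈ twoCocycle K L (TrivialLieModule K L M) :=
    (mem_twoCocycle_iff_cyclic_sum_eq_zero c').mpr fun X Y Z => congrArg e.symm (hcoc X Y Z)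
  obtain ⟨α, f, hf⟩ := hd.exists_cocycle_apply_eq_smul_add_apply_lie hc'
  refine ⟨e α, e.toLinearMap ∘ₗ f, fun m n => ?_⟩
  calc c (d m) (d n) = e (c' (d m) (d n)) := rfl
    _ = _ := by rw [hf, map_add, map_smul, LinearMap.comp_apply, LinearEquiv.coe_coe]

/-- Every 2-cocycle on the centerless Virasoro (Witt) algebra of derivations of
`ℂ[x,x⁻¹]` is, up to a coboundary, a scalar multiple of the Virasoro cocycle. -/
theorem virasoro_cocycle_classification
    (d : ℤ → Derivation ℂ (LaurentPolynomial ℂ) (LaurentPolynomial ℂ))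
    (hd : ∀ n : ℤ, d n (T 1) = -T (n + 1))
    (c : Derivation ℂ (LaurentPolynomial ℂ) (LaurentPolynomial ℂ) →ₗ[ℂ]
         Derivation ℂ (LaurentPolynomial ℂ) (LaurentPolynomial ℂ) →ₗ[ℂ] ℂ)
    (halt : ∀ X, c X X = 0)
    (hcoc : ∀ X Y Z, c ⁅X, Y⁆ Z + c ⁅Y, Z⁆ X + c ⁅Z, X⁆ Y = 0) :
    ∃ (α : ℂ) (f : Derivation ℂ (LaurentPolynomial ℂ) (LaurentPolynomial ℂ) →ₗ[ℂ] ℂ),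
      ∀ m n : ℤ, c (d m) (d n) =
        α * (if m + n = 0 then 1 else 0) * ((m : ℂ) ^ 3 - (m : ℂ)) + f ⁅d m, d n⁆ := by
  obtain ⟨α, f, hf⟩ := virasoro_cocycle_classification_general (isWittFamily_of_apply_T_one hd)
    c halt hcoc
  exact ⟨α, f, fun m n => by rw [hf, smul_eq_mul, mul_comm _ α, mul_assoc]⟩
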